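/- For μ sufficiently small, ∫_{ℝ³} |∇ g_β(z)|² dz ≤ C μ for a constant C depending only on a and ‖w‖_{L^∞}. -/

import Mathlib

open Set MeasureTheory

/-- The radial scattering data: the rescaled interaction `w_μ(r) = μ⁻² w(r/μ)` (given through its
radial profile `w`), its zero-energy scattering solution `j̃` in radial form, and for each `κ ≥ 1`
the function `f̃_κ` which equals `κ j̃` on `[0, μ^β̃]` and solves
`f̃_κ'' = -½ a μ^(1-3β̃) f̃_κ` beyond `μ^β̃`. -/
structure ScatteringODE where
  a : ℝ
  beta : ℝ
  mu : ℝ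
  w : ℝ → ℝ
  jt : ℝ → ℝ
  jt' : ℝ → ℝ
  ft : ℝ → ℝ → ℝ
  ft' : ℝ → ℝ → ℝ
  ha : 0 < a
  hbeta : beta ∈ Set.Ioo (1/3 : ℝ) 1
  hmu : mu ∈ Set.Ioo (0 : ℝ) 1
  hw_nonneg : ∀ r, 0 ≤ w r
  hw_bdd : ∃ M, ∀ r, w r ≤ M
  hw_supp : ∀ r, 1 < r → w r = 0
  hjt_deriv : ∀ r, HasDerivAt jt (jt' r) r
  hjt_zero : jt 0 = 0
  hjt_ode : ∀ r ∈ Set.Ioo 0 mu, HasDerivAt jt' ((1/2) * (mu⁻¹ ^ 2 * w (r / mu)) * jt r) r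
  hjt_lin : ∀ r, mu ≤ r → jt r = r - mu * a
  hjt_nonneg : ∀ r, 0 ≤ r → 0 ≤ jt r
  hjt_mono : MonotoneOn jt (Set.Ici 0)
  hjt_le : ∀ r, 0 ≤ r → jt r ≤ r
  hft_deriv : ∀ κ r : ℝ, HasDerivAt (ft κ) (ft' κ r) r
  hft_eq : ∀ κ : ℝ, ∀ r ∈ Set.Icc (0:ℝ) (mu ^ beta), ft κ r = κ * jt r
  hft_ode : ∀ κ r : ℝ, mu ^ beta < r →
      HasDerivAt (ft' κ) (-(1/2) * a * mu ^ (1 - 3 * beta) * ft κ r) r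

/-- A scattering setup together with the tangency parameter `κ_β ∈ (1, μ^β̃/(μ^β̃ - μa))` and the
minimal tangency radius `R_β ∈ (μ^β̃, ∞)` at which `f̃_{κ_β}` is tangent to the line `r ↦ r`. -/
structure TangentScattering extends ScatteringODE where
  hsmall : mu * a < mu ^ beta
  kappa : ℝ
  Rb : ℝ
  hkappa : kappa ∈ Set.Ioo 1 (mu ^ beta / (mu ^ beta - mu * a))
  hRb : mu ^ beta < Rb
  htan_val : ft kappa Rb = Rb
  htan_der : ft' kappa Rb = 1
  hRb_min : ∀ R : ℝ, mu ^ beta < R → ft kappa R = R → ft' kappa R = 1 → Rb ≤ R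

/-- The radial form `f̃` of the scattering solution `f_β`, extended by `f̃(r) = r` for `r ≥ R_β`. -/
noncomputable def TangentScattering.fext (S : TangentScattering) (r : ℝ) : ℝ :=
  if r < S.Rb then S.ft S.kappa r else r

/-- The scattering solution `f_β(z) = f̃(|z|)/|z|` (for `z ≠ 0`). -/
noncomputable def TangentScattering.fbeta (S : TangentScattering)
    (z : EuclideanSpace ℝ (Fin 3)) : ℝ :=
  S.fext ‖z‖ / ‖z‖

/-- Its complement `g_β = 1 - f_β`. -/
noncomputable def TangentScattering.gbeta (S : TangentScattering)
    (z : EuclideanSpace ℝ (Fin 3)) : ℝ :=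
  1 - S.fbeta z

/-- Conservation of energy for `f'' = -c f`, in the form of a bound on the slope. -/
lemma abs_deriv_le_of_harmonic {f f' : ℝ → ℝ} {c m R : ℝ} (hc : 0 ≤ c)
    (hf : ∀ r, HasDerivAt f (f' r) r) (hf' : ∀ r, m < r → HasDerivAt f' (-c * f r) r)
    {r : ℝ} (hr : m < r) (hmR : m < R) : |f' r| ≤ 1 + (f' R ^ 2 + c * f R ^ 2) := by
  have hE : ∀ x ∈ Ioi m, HasDerivAt (fun s => f' s ^ 2 + c * f s ^ 2) 0 x := by
    intro x hx
    refine (((hf' x hx).pow 2).add (((hf x).pow 2).const_mul c)).congr_deriv ?_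
    norm_num
    ring
  have hconst : f' r ^ 2 + c * f r ^ 2 = f' R ^ 2 + c * f R ^ 2 := by
    refine (convex_Ioi m).is_const_of_fderivWithin_eq_zero (𝕜 := ℝ)
      (f := fun s => f' s ^ 2 + c * f s ^ 2)
      (fun x hx => (hE x hx).differentiableAt.differentiableWithinAt) ?_ hr hmR
    intro x hx
    have h := ((hE x hx).hasFDerivAt.hasFDerivWithinAt (s := Ioi m)).fderivWithin
      (isOpen_Ioi.uniqueDiffWithinAt hx)
    rw [h]
    ext
    simp
  have h1 : 0 ≤ c * f r ^ 2 := by positivity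
  rw [abs_le]
  constructor <;> nlinarith [sq_nonneg (f' r - 1), sq_nonneg (f' r + 1)]

/-- A solution of `f'' = -c f` tangent to the diagonal at `R` has `r f' - f` of order `c R³`. -/
lemma abs_mul_deriv_sub_le_of_tangent {f f' : ℝ → ℝ} {c m R : ℝ} (hc : 0 ≤ c) (hm : 0 ≤ m)
    (hf : ∀ r, HasDerivAt f (f' r) r) (hf' : ∀ r, m < r → HasDerivAt f' (-c * f r) r)
    (hval : f R = R) (hder : f' R = 1) {r : ℝ} (hr : m < r) (hrR : r < R) :
    |r * f' r - f r| ≤ c * R ^ 3 * (3 + c * R ^ 2) := by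
  have hR : 0 < R := by linarith
  have hslope : ∀ s, m < s → |f' s| ≤ 2 + c * R ^ 2 := by
    intro s hs
    have h := abs_deriv_le_of_harmonic hc hf hf' hs (hr.trans hrR)
    rw [hval, hder] at h
    linarith
  have hfb : ∀ s, m < s → s < R → |f s| ≤ (3 + c * R ^ 2) * R := by
    intro s hs hsR
    obtain ⟨d, hd, hd'⟩ := exists_hasDerivAt_eq_slope f f' hsR
      (fun x _ => (hf x).continuousAt.continuousWithinAt) (fun x _ => hf x)
    have hne : R - s ≠ 0 := by linarith
    rw [eq_div_iff hne] at hd'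
    have h2 := hslope d (hs.trans hd.1)
    have h3 : |f' d * (R - s)| ≤ (2 + c * R ^ 2) * R := by
      rw [abs_mul, abs_of_pos (by linarith : 0 < R - s)]
      exact mul_le_mul h2 (by linarith) (by linarith) (by positivity)
    rw [abs_le] at h3 ⊢
    constructor <;> nlinarith
  have hp : ∀ x, m < x → HasDerivAt (fun s => s * f' s - f s) (x * (-c * f x)) x := by
    intro x hx
    refine (((hasDerivAt_id x).mul (hf' x hx)).sub (hf x)).congr_deriv ?_
    rw [id_eq]
    ring
  obtain ⟨d, hd, hd'⟩ := exists_hasDerivAt_eq_slope (fun s => s * f' s - f s)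
    (fun x => x * (-c * f x)) hrR
    (fun x hx => (hp x (hr.trans_le hx.1)).continuousAt.continuousWithinAt)
    (fun x hx => hp x (hr.trans hx.1))
  have hne : R - r ≠ 0 := by linarith
  rw [eq_div_iff hne, hval, hder] at hd'
  have hd0 : 0 < d := by linarith [hd.1]
  have h4 : r * f' r - f r = d * (c * f d) * (R - r) := by linarith
  rw [h4, abs_mul, abs_mul, abs_mul, abs_of_pos hd0, abs_of_nonneg hc,
    abs_of_pos (by linarith : 0 < R - r)]
  have h5 := hfb d (hr.trans hd.1) hd.2
  calc d * (c * |f d|) * (R - r) ≤ R * (c * ((3 + c * R ^ 2) * R)) * R := by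
        gcongr
        · exact hd.2.le
        · linarith
    _ = _ := by ring

/-- The gradient of a radial function is bounded by its radial derivative. -/
lemma norm_fderiv_comp_norm_le {E : Type*} [NormedAddCommGroup E] [InnerProductSpace ℝ E]
    {g : E → ℝ} {h : ℝ → ℝ} {h' : ℝ} {z : E} (hz : z ≠ 0) (hh : HasDerivAt h h' ‖z‖)
    (hg : g =ᶠ[nhds z] fun y => h ‖y‖) : ‖fderiv ℝ g z‖ ≤ |h'| := by
  have hn : HasFDerivAt (fun y : E => ‖y‖) (fderiv ℝ (fun y : E => ‖y‖) z) z :=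
    ((contDiffAt_norm ℝ (n := 1) hz).differentiableAt (by norm_num)).hasFDerivAt
  have hc : HasFDerivAt (fun y : E => h ‖y‖) (h' • fderiv ℝ (fun y : E => ‖y‖) z) z :=
    hh.comp_hasFDerivAt z hn
  rw [hg.fderiv_eq, hc.fderiv, norm_smul, Real.norm_eq_abs]
  have hL : ‖fderiv ℝ (fun y : E => ‖y‖) z‖ ≤ 1 := by
    simpa using norm_fderiv_le_of_lipschitz ℝ (lipschitzWith_one_norm (E := E)) (x₀ := z)
  exact mul_le_of_le_one_right (abs_nonneg _) hL

lemma integrable_sq_inv_one_add_norm_sq :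
    Integrable fun z : EuclideanSpace ℝ (Fin 3) => ((1 + ‖z‖ ^ 2)⁻¹) ^ 2 := by
  have h := integrable_rpow_neg_one_add_norm_sq (E := EuclideanSpace ℝ (Fin 3)) (μ := volume)
    (r := 4) (by simp; norm_num)
  refine h.congr (Filter.Eventually.of_forall fun z => ?_)
  have h0 : 0 ≤ 1 + ‖z‖ ^ 2 := by positivity
  have h2 : (-4 / 2 : ℝ) = -(2 : ℕ) := by norm_num
  simp only
  rw [h2, Real.rpow_neg h0, Real.rpow_natCast, inv_pow]

lemma sq_div_add_norm_sq_eq {K m : ℝ} (hm : 0 < m) (z : EuclideanSpace ℝ (Fin 3)) :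
    (K * m / (m ^ 2 + ‖z‖ ^ 2)) ^ 2 = (K / m) ^ 2 * ((1 + ‖m⁻¹ • z‖ ^ 2)⁻¹) ^ 2 := by
  rw [← mul_pow, norm_smul, norm_inv, Real.norm_eq_abs, abs_of_pos hm]
  congr 1
  have : m ^ 2 + ‖z‖ ^ 2 ≠ 0 := by positivity
  field_simp

lemma integrable_sq_div_add_norm_sq {K m : ℝ} (hm : 0 < m) :
    Integrable fun z : EuclideanSpace ℝ (Fin 3) => (K * m / (m ^ 2 + ‖z‖ ^ 2)) ^ 2 := by
  simp only [sq_div_add_norm_sq_eq hm]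
  exact (integrable_sq_inv_one_add_norm_sq.comp_smul (inv_ne_zero hm.ne')).const_mul _

lemma integral_sq_div_add_norm_sq {K m : ℝ} (hm : 0 < m) :
    ∫ z : EuclideanSpace ℝ (Fin 3), (K * m / (m ^ 2 + ‖z‖ ^ 2)) ^ 2 =
      K ^ 2 * (∫ z : EuclideanSpace ℝ (Fin 3), ((1 + ‖z‖ ^ 2)⁻¹) ^ 2) * m := by
  simp only [sq_div_add_norm_sq_eq hm]
  rw [integral_const_mul, Measure.integral_comp_smul volume
    (fun z : EuclideanSpace ℝ (Fin 3) => ((1 + ‖z‖ ^ 2)⁻¹) ^ 2)]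
  simp only [finrank_euclideanSpace, Fintype.card_fin, smul_eq_mul]
  rw [abs_of_pos (by positivity)]
  field_simp

namespace ScatteringODE

variable (S : ScatteringODE)

lemma mu_lt_mu_rpow_beta : S.mu < S.mu ^ S.beta := by
  simpa using Real.rpow_lt_rpow_of_exponent_gt S.hmu.1 S.hmu.2 S.hbeta.2

lemma jt'_eq_one {r : ℝ} (hr : S.mu ≤ r) : S.jt' r = 1 := by
  have h1 : HasDerivWithinAt (fun s => s - S.mu * S.a) 1 (Ici r) r :=
    ((hasDerivAt_id r).sub_const _).hasDerivWithinAt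
  have h2 : HasDerivWithinAt S.jt 1 (Ici r) r :=
    h1.congr (fun s hs => S.hjt_lin s (hr.trans hs)) (S.hjt_lin r hr)
  exact (uniqueDiffOn_Ici r r self_mem_Ici).eq_deriv _ (S.hjt_deriv r).hasDerivWithinAt h2

lemma a_lt_one : S.a < 1 := by
  have hmu := S.hmu.1
  by_contra! h
  have hz : ∀ s ∈ Icc 0 S.mu, S.jt s = 0 := by
    intro s hs
    refine le_antisymm ?_ (S.hjt_nonneg s hs.1)
    refine (S.hjt_mono hs.1 hmu.le hs.2).trans ?_
    rw [S.hjt_lin _ le_rfl]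
    nlinarith
  have hmem : S.mu ∈ Icc 0 S.mu := ⟨hmu.le, le_rfl⟩
  have h1 : HasDerivWithinAt S.jt 0 (Icc 0 S.mu) S.mu :=
    (hasDerivWithinAt_const S.mu (Icc 0 S.mu) (0 : ℝ)).congr hz (hz _ hmem)
  have h2 := (uniqueDiffOn_Icc hmu S.mu hmem).eq_deriv _ h1 (S.hjt_deriv S.mu).hasDerivWithinAt
  rw [S.jt'_eq_one le_rfl] at h2
  norm_num at h2

lemma ft'_eq {κ r : ℝ} (hr : r ∈ Icc 0 (S.mu ^ S.beta)) : S.ft' κ r = κ * S.jt' r := by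
  have h1 : HasDerivWithinAt (S.ft κ) (κ * S.jt' r) (Icc 0 (S.mu ^ S.beta)) r :=
    ((S.hjt_deriv r).const_mul κ).hasDerivWithinAt.congr (S.hft_eq κ) (S.hft_eq κ r hr)
  exact (uniqueDiffOn_Icc (S.hmu.1.trans S.mu_lt_mu_rpow_beta) r hr).eq_deriv _
    (S.hft_deriv κ r).hasDerivWithinAt h1

lemma abs_mul_jt'_sub_jt_le {M r : ℝ} (hM : ∀ s, S.w s ≤ M) (hr0 : 0 < r) (hr : r < S.mu) :
    |r * S.jt' r - S.jt r| ≤ M / (2 * S.mu ^ 2) * r ^ 3 := by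
  have hmu := S.hmu.1
  have hM0 : 0 ≤ M := (S.hw_nonneg 0).trans (hM 0)
  obtain ⟨c, hc, hc'⟩ := exists_hasDerivAt_eq_slope S.jt S.jt' hr0
    (fun x _ => (S.hjt_deriv x).continuousAt.continuousWithinAt) (fun x _ => S.hjt_deriv x)
  rw [S.hjt_zero, sub_zero, sub_zero, eq_div_iff hr0.ne'] at hc'
  obtain ⟨d, hd, hd'⟩ := exists_hasDerivAt_eq_slope S.jt' _ hc.2
    (fun x hx => (S.hjt_ode x ⟨hc.1.trans_le hx.1, hx.2.trans_lt hr⟩).continuousAt.continuousWithinAt)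
    (fun x hx => S.hjt_ode x ⟨hc.1.trans hx.1, hx.2.trans hr⟩)
  have hne : r - c ≠ 0 := by linarith [hc.2]
  rw [eq_div_iff hne] at hd'
  have hd0 : 0 < d := hc.1.trans hd.1
  have hj0 := S.hjt_nonneg d hd0.le
  have hj1 := (S.hjt_le d hd0.le).trans hd.2.le
  have hw0 := S.hw_nonneg (d / S.mu)
  have hw1 := hM (d / S.mu)
  have hrc : 0 ≤ r - c := by linarith [hc.2]
  have key : r * S.jt' r - S.jt r =
      r * ((1/2) * (S.mu⁻¹ ^ 2 * S.w (d / S.mu)) * S.jt d * (r - c)) := by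
    rw [hd', ← hc']; ring
  rw [key, abs_of_nonneg (by positivity)]
  calc r * ((1/2) * (S.mu⁻¹ ^ 2 * S.w (d / S.mu)) * S.jt d * (r - c))
      ≤ r * ((1/2) * (S.mu⁻¹ ^ 2 * M) * r * r) := by
        gcongr
        linarith [hc.1]
    _ = _ := by field_simp

end ScatteringODE

namespace TangentScattering

variable (S : TangentScattering)

lemma kappa_le : S.kappa ≤ 1 / (1 - S.a) := by
  have h1 := S.a_lt_one
  have h2 := S.mu_lt_mu_rpow_beta
  have h3 := S.hsmall
  refine S.hkappa.2.le.trans ?_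
  rw [div_le_div_iff₀ (by linarith) (by linarith)]
  nlinarith [S.ha]

/-- The radial derivative of `f_β` decays like `μ / (μ² + r²)`. -/
lemma abs_radial_deriv_le {M C' r : ℝ} (hM : ∀ s, S.w s ≤ M) (hC' : 0 < C')
    (hR : S.Rb ≤ C' * S.mu ^ S.beta) (hr0 : 0 < r) (hr : r < S.Rb) :
    |(S.ft' S.kappa r * r - S.ft S.kappa r) / r ^ 2| ≤
      (M / (1 - S.a) + 2 * S.a / (1 - S.a) + S.a * C' ^ 3 * (3 + S.a * C' ^ 2)) * S.mu /
        (S.mu ^ 2 + r ^ 2) := by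
  have hmu := S.hmu.1
  have ha := S.ha
  have ha1 := S.a_lt_one
  have hlt := S.mu_lt_mu_rpow_beta
  have hκ := S.kappa_le
  have hκ0 : 0 < S.kappa := by linarith [S.hkappa.1]
  have hM0 : 0 ≤ M := (S.hw_nonneg 0).trans (hM 0)
  have h1a : 0 < 1 - S.a := by linarith
  have hK1 : S.kappa * M ≤ M / (1 - S.a) := by
    calc S.kappa * M ≤ 1 / (1 - S.a) * M := by gcongr
      _ = _ := by ring
  have hK2 : S.kappa * S.a ≤ S.a / (1 - S.a) := by
    calc S.kappa * S.a ≤ 1 / (1 - S.a) * S.a := by gcongr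
      _ = _ := by ring
  have hK2' : 2 * S.a / (1 - S.a) = 2 * (S.a / (1 - S.a)) := by ring
  have hM' : 0 ≤ M / (1 - S.a) := by positivity
  have ha' : 0 ≤ S.a / (1 - S.a) := by positivity
  have hK3 : 0 ≤ S.a * C' ^ 3 * (3 + S.a * C' ^ 2) := by positivity
  rw [hK2']
  rw [abs_div, abs_of_pos (by positivity : 0 < r ^ 2),
    div_le_div_iff₀ (by positivity) (by positivity), mul_comm (S.ft' S.kappa r)]
  rcases lt_or_ge r S.mu with hrm | hrm
  · have hmem : r ∈ Icc 0 (S.mu ^ S.beta) := ⟨hr0.le, by linarith⟩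
    rw [S.hft_eq _ r hmem, S.ft'_eq hmem]
    have hq := S.abs_mul_jt'_sub_jt_le hM hr0 hrm
    have e : r * (S.kappa * S.jt' r) - S.kappa * S.jt r =
      S.kappa * (r * S.jt' r - S.jt r) := by ring
    rw [e, abs_mul, abs_of_pos hκ0]
    calc S.kappa * |r * S.jt' r - S.jt r| * (S.mu ^ 2 + r ^ 2)
        ≤ S.kappa * (M / (2 * S.mu ^ 2) * r ^ 3) * (S.mu ^ 2 + S.mu ^ 2) := by gcongr
      _ = (S.kappa * M) * r * r ^ 2 := by field_simp; ring
      _ ≤ _ := by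
        gcongr
        linarith
  have hsq : S.mu ^ 2 ≤ r ^ 2 := by gcongr
  suffices h : |r * S.ft' S.kappa r - S.ft S.kappa r| * 2 ≤
      (M / (1 - S.a) + 2 * (S.a / (1 - S.a)) + S.a * C' ^ 3 * (3 + S.a * C' ^ 2)) * S.mu by
    calc _ ≤ |r * S.ft' S.kappa r - S.ft S.kappa r| * (r ^ 2 + r ^ 2) := by gcongr
      _ = |r * S.ft' S.kappa r - S.ft S.kappa r| * 2 * r ^ 2 := by ring
      _ ≤ _ := by gcongr
  rcases le_or_gt r (S.mu ^ S.beta) with hrb | hrb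
  · have hmem : r ∈ Icc 0 (S.mu ^ S.beta) := ⟨hr0.le, hrb⟩
    rw [S.hft_eq _ r hmem, S.ft'_eq hmem, S.jt'_eq_one hrm, S.hjt_lin r hrm]
    have e : r * (S.kappa * 1) - S.kappa * (r - S.mu * S.a) = S.kappa * S.a * S.mu := by ring
    rw [e, abs_of_pos (by positivity)]
    nlinarith
  · have hpow : 0 < S.mu ^ (1 - 3 * S.beta) := Real.rpow_pos_of_pos hmu _
    have hb : 0 < S.mu ^ S.beta := Real.rpow_pos_of_pos hmu _
    have hRb : 0 < S.Rb := hb.trans S.hRb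
    have h3 : S.mu ^ (1 - 3 * S.beta) * (S.mu ^ S.beta) ^ 3 = S.mu := by
      rw [← Real.rpow_natCast (S.mu ^ S.beta) 3, ← Real.rpow_mul hmu.le, ← Real.rpow_add hmu]
      have : 1 - 3 * S.beta + S.beta * (3 : ℕ) = 1 := by push_cast; ring
      rw [this, Real.rpow_one]
    have h2 : S.mu ^ (1 - 3 * S.beta) * (S.mu ^ S.beta) ^ 2 ≤ 1 := by
      by_contra! h
      nlinarith
    have hp := abs_mul_deriv_sub_le_of_tangent
      (c := 1 / 2 * S.a * S.mu ^ (1 - 3 * S.beta)) (by positivity) hb.le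
      (S.hft_deriv S.kappa)
      (fun s hs => (S.hft_ode S.kappa s hs).congr_deriv (by ring)) S.htan_val S.htan_der hrb hr
    have hb3 : 1 / 2 * S.a * S.mu ^ (1 - 3 * S.beta) * S.Rb ^ 3 ≤
        1 / 2 * S.a * C' ^ 3 * S.mu := by
      calc _ ≤ 1 / 2 * S.a * S.mu ^ (1 - 3 * S.beta) * (C' * S.mu ^ S.beta) ^ 3 := by gcongr
        _ = 1 / 2 * S.a * C' ^ 3 * (S.mu ^ (1 - 3 * S.beta) * (S.mu ^ S.beta) ^ 3) := by ring
        _ = _ := by rw [h3]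
    have hb2 : 1 / 2 * S.a * S.mu ^ (1 - 3 * S.beta) * S.Rb ^ 2 ≤ S.a * C' ^ 2 := by
      calc _ ≤ 1 / 2 * S.a * S.mu ^ (1 - 3 * S.beta) * (C' * S.mu ^ S.beta) ^ 2 := by gcongr
        _ = 1 / 2 * S.a * C' ^ 2 * (S.mu ^ (1 - 3 * S.beta) * (S.mu ^ S.beta) ^ 2) := by ring
        _ ≤ 1 / 2 * S.a * C' ^ 2 * 1 := by gcongr
        _ ≤ _ := by nlinarith [mul_pos ha (pow_pos hC' 2)]
    calc _ ≤ (1 / 2 * S.a * C' ^ 3 * S.mu) * (3 + S.a * C' ^ 2) * 2 := by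
          refine mul_le_mul_of_nonneg_right (hp.trans ?_) (by norm_num)
          gcongr
      _ = S.a * C' ^ 3 * (3 + S.a * C' ^ 2) * S.mu := by ring
      _ ≤ _ := by
        gcongr
        linarith

lemma norm_fderiv_gbeta_le {K : ℝ} (hK : 0 ≤ K)
    (hb : ∀ r, 0 < r → r < S.Rb →
      |(S.ft' S.kappa r * r - S.ft S.kappa r) / r ^ 2| ≤ K * S.mu / (S.mu ^ 2 + r ^ 2))
    {z : EuclideanSpace ℝ (Fin 3)} (hz : z ≠ 0) (hzR : ‖z‖ ≠ S.Rb) :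
    ‖fderiv ℝ S.gbeta z‖ ≤ K * S.mu / (S.mu ^ 2 + ‖z‖ ^ 2) := by
  have hz0 : 0 < ‖z‖ := norm_pos_iff.mpr hz
  rcases lt_or_gt_of_ne hzR with hlt | hgt
  · have hd : HasDerivAt (fun r => 1 - S.ft S.kappa r / r)
        (-((S.ft' S.kappa ‖z‖ * ‖z‖ - S.ft S.kappa ‖z‖) / ‖z‖ ^ 2)) ‖z‖ := by
      have h := ((S.hft_deriv S.kappa ‖z‖).div (hasDerivAt_id ‖z‖) hz0.ne').const_sub 1
      simpa using h
    refine (norm_fderiv_comp_norm_le hz hd ?_).trans ?_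
    · filter_upwards [continuous_norm.continuousAt.eventually_lt_const hlt] with y hy
      simp only [gbeta, fbeta, fext, if_pos hy]
    · rw [abs_neg]
      exact hb _ hz0 hlt
  · refine (norm_fderiv_comp_norm_le hz (hasDerivAt_const ‖z‖ (0 : ℝ)) ?_).trans ?_
    · filter_upwards [continuous_norm.continuousAt.eventually_const_lt hgt,
        continuous_norm.continuousAt.eventually_const_lt hz0] with y hy hy0
      simp only [gbeta, fbeta, fext, if_neg hy.not_gt]
      rw [div_self hy0.ne', sub_self]
    · have := S.hmu.1
      rw [abs_zero]
      positivity

end TangentScattering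

/-- For `μ` sufficiently small, `∫_{ℝ³} |∇ g_β|² ≤ C μ` with a constant `C` depending only on `a`
and `‖w‖_∞`. -/
theorem gradient_gbeta_L2_bound (a M C' : ℝ) (ha : 0 < a) (hM : 0 ≤ M) (hC' : 0 < C') :
    ∃ C > (0:ℝ), ∃ μ₀ > (0:ℝ),
      ∀ S : TangentScattering, S.a = a → (∀ r, S.w r ≤ M) →
        S.Rb ≤ C' * S.mu ^ S.beta → S.mu ≤ μ₀ →
        (∫ z : EuclideanSpace ℝ (Fin 3), ‖fderiv ℝ S.gbeta z‖ ^ 2) ≤ C * S.mu := by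
  set K := M / (1 - a) + 2 * a / (1 - a) + a * C' ^ 3 * (3 + a * C' ^ 2) with hKdef
  set I := ∫ z : EuclideanSpace ℝ (Fin 3), ((1 + ‖z‖ ^ 2)⁻¹) ^ 2 with hI
  have hI0 : 0 ≤ I := integral_nonneg fun z => by positivity
  refine ⟨K ^ 2 * I + 1, by positivity, 1, one_pos, ?_⟩
  rintro S rfl hw hR -
  have hmu := S.hmu.1
  have h1a : 0 < 1 - S.a := sub_pos.mpr S.a_lt_one
  have hK : 0 ≤ K := by positivity
  have hRb : S.Rb ≠ 0 := ((Real.rpow_pos_of_pos hmu _).trans S.hRb).ne'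
  have hae : ∀ᵐ z : EuclideanSpace ℝ (Fin 3), z ≠ 0 ∧ ‖z‖ ≠ S.Rb := by
    have h1 : ∀ᵐ z : EuclideanSpace ℝ (Fin 3), z ≠ 0 := Measure.ae_ne volume 0
    have h2 : ∀ᵐ z : EuclideanSpace ℝ (Fin 3), z ∉ Metric.sphere 0 S.Rb :=
      measure_eq_zero_iff_ae_notMem.mp (Measure.addHaar_sphere_of_ne_zero volume 0 hRb)
    filter_upwards [h1, h2] with z hz1 hz2
    exact ⟨hz1, by simpa using hz2⟩
  calc ∫ z : EuclideanSpace ℝ (Fin 3), ‖fderiv ℝ S.gbeta z‖ ^ 2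
      ≤ ∫ z : EuclideanSpace ℝ (Fin 3), (K * S.mu / (S.mu ^ 2 + ‖z‖ ^ 2)) ^ 2 := by
        refine integral_mono_of_nonneg (Filter.Eventually.of_forall fun z => by positivity)
          (integrable_sq_div_add_norm_sq hmu) ?_
        filter_upwards [hae] with z hz
        have h := S.norm_fderiv_gbeta_le hK
          (fun r hr0 hr => S.abs_radial_deriv_le hw hC' hR hr0 hr) hz.1 hz.2
        gcongr
    _ = K ^ 2 * I * S.mu := integral_sq_div_add_norm_sq hmu
    _ ≤ (K ^ 2 * I + 1) * S.mu := by nlinarith
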